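/- Let μ be a Borel probability measure on ℝ^d with por(μ) > 0. Then μ is singular with respect to d-dimensional Lebesgue measure. -/

import Mathlib

open MeasureTheory Filter Metric Set
open scoped Classical

/-- `por(μ,x,r,ε)`: the supremum of `α ≥ 0` such that some ball `B(y,αr) ⊆ B(x,r)` has
`μ(B(y,αr)) ≤ ε·μ(B(x,r))` (an "ε-hole" of relative size `α`). -/
noncomputable def porMeas {X : Type*} [MetricSpace X] [MeasurableSpace X]
    (μ : Measure X) (x : X) (r ε : ℝ) : ℝ :=
  sSup {α : ℝ | 0 ≤ α ∧ ∃ y, Metric.ball y (α * r) ⊆ Metric.ball x r ∧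
    μ (Metric.ball y (α * r)) ≤ ENNReal.ofReal ε * μ (Metric.ball x r)}

/-- `por(μ,x,ε) = liminf_{r→0} por(μ,x,r,ε)`. -/
noncomputable def porMeasPt {X : Type*} [MetricSpace X] [MeasurableSpace X]
    (μ : Measure X) (x : X) (ε : ℝ) : ℝ :=
  Filter.liminf (fun r : ℝ => porMeas μ x r ε) (nhdsWithin 0 (Set.Ioi 0))

/-- `por(μ,ε)`: the `μ`-essential infimum of `x ↦ por(μ,x,ε)`. -/
noncomputable def porMeasEps {X : Type*} [MetricSpace X] [MeasurableSpace X]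
    (μ : Measure X) (ε : ℝ) : ℝ :=
  essInf (fun x => porMeasPt μ x ε) μ

/-- `por(μ) = lim_{ε→0⁺} por(μ,ε)`; since `ε ↦ por(μ,ε)` is nondecreasing, this limit is
the infimum of `por(μ,ε)` over `ε > 0`. -/
noncomputable def porMeasure {X : Type*} [MetricSpace X] [MeasurableSpace X]
    (μ : Measure X) : ℝ :=
  sInf ((fun ε => porMeasEps μ ε) '' Set.Ioi 0)

/-!
If `ν` is uniformly locally doubling, then for `ν`-almost every `x` the ratio `μ(B) / ν(B)` tends to
`D = dμ/dν (x)` as the ball `B` shrinks to `x`, even when `B` is centred elsewhere, as long as its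
distance to `x` is at most a fixed multiple of its radius. An `ε`-hole of relative size `c` near `x`
is such a ball, and by doubling its `ν`-measure is at least `ν(B(x,r)) / C`, where `C` depends only
on `c`. Comparing the two ratios gives `D ≤ ε C D`, so `D = 0` as soon as `ε C < 1`. Positive
porosity provides holes of a fixed relative size `c` for every `ε > 0`, at `μ`-almost every point,
hence at `ν`-almost every point where `D ≠ 0`.
-/

open scoped ENNReal Topology

lemma div_le_mul_div_of_le_mul {a b v w ε C : ℝ≥0∞} (hC : C ≠ 0) (hC' : C ≠ ∞)
    (hab : a ≤ ε * b) (hwv : w ≤ C * v) : a / v ≤ ε * C * (b / w) :=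
  calc a / v ≤ ε * b / v := by gcongr
    _ = ε * C * (b / (C * v)) := by
      rw [mul_assoc, ← mul_div_assoc, ENNReal.mul_div_mul_left _ _ hC hC', mul_div_assoc]
    _ ≤ ε * C * (b / w) := by gcongr

-- If `u` tends to `∞`, its real `liminf` is the junk value `0`.
lemma liminf_nonneg_of_eventually_nonneg {ι : Type*} {l : Filter ι} {u : ι → ℝ}
    (h : ∀ᶠ i in l, 0 ≤ u i) : 0 ≤ liminf u l := by
  rw [liminf_eq]
  exact Real.sSup_nonneg' ⟨0, h, le_rfl⟩

/-- An `ε`-hole of `μ` of relative size `c` in the ball `B(x,r)`. Both balls are closed and the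
hole is only required to be centred in `B(x,r)`, as suits the differentiation theorem for measures
along closed balls. -/
def HasHole {X : Type*} [PseudoMetricSpace X] [MeasurableSpace X]
    (μ : Measure X) (c : ℝ) (ε : ℝ≥0∞) (x : X) (r : ℝ) : Prop :=
  ∃ y ∈ closedBall x r, μ (closedBall y (c * r)) ≤ ε * μ (closedBall x r)

section Porosity

variable {X : Type*} [MetricSpace X] [MeasurableSpace X] {μ : Measure X} {x : X} {c r ε : ℝ}

lemma porMeas_nonneg : 0 ≤ porMeas μ x r ε :=
  Real.sSup_nonneg fun _ hα => hα.1

lemma exists_ball_of_lt_porMeas (h : c < porMeas μ x r ε) :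
    ∃ α, c < α ∧ ∃ y, ball y (α * r) ⊆ ball x r ∧
      μ (ball y (α * r)) ≤ ENNReal.ofReal ε * μ (ball x r) := by
  rw [porMeas] at h
  -- The empty ball `B(x,0)` is a hole of relative size `0`.
  obtain ⟨α, ⟨-, hole⟩, hcα⟩ := exists_lt_of_lt_csSup (by exact ⟨0, le_rfl, x, by simp⟩) h
  exact ⟨α, hcα, hole⟩

lemma isBoundedUnder_porMeas {l : Filter ℝ} :
    l.IsBoundedUnder (· ≥ ·) fun r => porMeas μ x r ε :=
  isBoundedUnder_of ⟨0, fun _ => porMeas_nonneg⟩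

lemma porMeasPt_nonneg : 0 ≤ porMeasPt μ x ε :=
  liminf_nonneg_of_eventually_nonneg (Eventually.of_forall fun _ => porMeas_nonneg)

lemma isBoundedUnder_porMeasPt {l : Filter X} :
    l.IsBoundedUnder (· ≥ ·) fun x => porMeasPt μ x ε :=
  isBoundedUnder_of ⟨0, fun _ => porMeasPt_nonneg⟩

lemma porMeasEps_nonneg : 0 ≤ porMeasEps μ ε :=
  liminf_nonneg_of_eventually_nonneg (Eventually.of_forall fun _ => porMeasPt_nonneg)

lemma porMeasure_le_porMeasEps (hε : 0 < ε) : porMeasure μ ≤ porMeasEps μ ε :=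
  csInf_le ⟨0, forall_mem_image.2 fun _ _ => porMeasEps_nonneg⟩ (mem_image_of_mem _ hε)

lemma ae_eventually_lt_porMeas_of_lt_porMeasure (hε : 0 < ε) (h : c < porMeasure μ) :
    ∀ᵐ x ∂μ, ∀ᶠ r in 𝓝[>] 0, c < porMeas μ x r ε := by
  have hc : c < porMeasEps μ ε := h.trans_le (porMeasure_le_porMeasEps hε)
  filter_upwards [ae_lt_of_lt_essInf hc isBoundedUnder_porMeasPt] with x hx
  exact eventually_lt_of_lt_liminf hx isBoundedUnder_porMeas

lemma hasHole_of_lt_porMeas (hc : 0 ≤ c) (hr : 0 < r) (h : c < porMeas μ x r ε) :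
    HasHole μ c (ENNReal.ofReal ε) x r := by
  obtain ⟨α, hcα, y, hsub, hμ⟩ := exists_ball_of_lt_porMeas h
  have hy : y ∈ ball x r := hsub (mem_ball_self (mul_pos (hc.trans_lt hcα) hr))
  refine ⟨y, ball_subset_closedBall hy, ?_⟩
  calc μ (closedBall y (c * r))
      ≤ μ (ball y (α * r)) := measure_mono (closedBall_subset_ball (by gcongr))
    _ ≤ ENNReal.ofReal ε * μ (ball x r) := hμ
    _ ≤ ENNReal.ofReal ε * μ (closedBall x r) := by gcongr; exact ball_subset_closedBall

lemma ae_eventually_hasHole_of_lt_porMeasure (hc : 0 ≤ c) (hε : 0 < ε) (h : c < porMeasure μ) :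
    ∀ᵐ x ∂μ, ∀ᶠ r in 𝓝[>] 0, HasHole μ c (ENNReal.ofReal ε) x r := by
  filter_upwards [ae_eventually_lt_porMeas_of_lt_porMeasure hε h] with x hx
  filter_upwards [hx, self_mem_nhdsWithin] with r hlt hr using hasHole_of_lt_porMeas hc hr hlt

end Porosity

section Doubling

open IsUnifLocDoublingMeasure

variable {X : Type*} [PseudoMetricSpace X] [MeasurableSpace X] {μ : Measure X}
  (ν : Measure X) [IsUnifLocDoublingMeasure ν] {c : ℝ} {ε : ℝ≥0∞}

lemma eventually_measure_closedBall_le_scalingConstantOf_mul (hc : 0 < c) :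
    ∀ᶠ r in 𝓝[>] 0, ∀ x, ∀ y ∈ closedBall x r,
      ν (closedBall x r) ≤ scalingConstantOf ν (2 / c) * ν (closedBall y (c * r)) := by
  filter_upwards [eventually_nhdsGT_zero_mul_left hc
    (eventually_measure_le_scaling_constant_mul ν (2 / c))] with r hr x y hy
  have hsub : closedBall x r ⊆ closedBall y (2 / c * (c * r)) := by
    apply closedBall_subset_closedBall'
    rw [← mul_assoc, div_mul_cancel₀ _ hc.ne', two_mul]
    gcongr
    exact mem_closedBall'.1 hy
  exact (measure_mono hsub).trans (hr y)

lemma le_mul_of_frequently_hasHole [SecondCountableTopology X] [BorelSpace X]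
    [IsLocallyFiniteMeasure ν] {x : X} {D : ℝ≥0∞} (hc : 0 < c)
    (hD : Tendsto (fun s => μ s / ν s) ((vitaliFamily ν c⁻¹).filterAt x) (𝓝 D))
    (h : ∃ᶠ r in 𝓝[>] 0, HasHole μ c ε x r) :
    D ≤ ε * scalingConstantOf ν (2 / c) * D := by
  rcases eq_or_ne D 0 with rfl | hD_ne
  · exact zero_le
  obtain ⟨r, hr, hhole⟩ := exists_seq_forall_of_frequently h
  choose y hy hμ using hhole
  have hr_pos : ∀ᶠ n in atTop, 0 < r n := hr self_mem_nhdsWithin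
  have hcr : Tendsto (fun n => c * r n) atTop (𝓝[>] 0) :=
    fun s hs => hr (eventually_nhdsGT_zero_mul_left hc hs)
  have tendsto_ball : Tendsto (fun n => μ (closedBall x (r n)) / ν (closedBall x (r n))) atTop
      (𝓝 D) := by
    refine hD.comp (tendsto_closedBall_filterAt ν _ r hr ?_)
    filter_upwards [hr_pos] with n hn using mem_closedBall_self (by positivity)
  have tendsto_hole : Tendsto
      (fun n => μ (closedBall (y n) (c * r n)) / ν (closedBall (y n) (c * r n))) atTop (𝓝 D) := by
    refine hD.comp (tendsto_closedBall_filterAt ν y _ hcr (Eventually.of_forall fun n => ?_))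
    rw [inv_mul_cancel_left₀ hc.ne']
    exact mem_closedBall_comm.1 (hy n)
  have hC : (scalingConstantOf ν (2 / c) : ℝ≥0∞) ≠ 0 :=
    ENNReal.coe_ne_zero.2 (zero_lt_one.trans_le (one_le_scalingConstantOf ν _)).ne'
  refine le_of_tendsto_of_tendsto tendsto_hole
    (ENNReal.Tendsto.const_mul tendsto_ball (.inl hD_ne)) ?_
  filter_upwards [hr.eventually (eventually_measure_closedBall_le_scalingConstantOf_mul ν hc)]
    with n hn
  exact div_le_mul_div_of_le_mul hC ENNReal.coe_ne_top (hμ n) (hn x _ (hy n))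

theorem mutuallySingular_of_ae_frequently_hasHole [SecondCountableTopology X] [BorelSpace X]
    [IsLocallyFiniteMeasure μ] [IsLocallyFiniteMeasure ν] (hc : 0 < c)
    (hεC : ε * scalingConstantOf ν (2 / c) < 1)
    (h : ∀ᵐ x ∂μ, ∃ᶠ r in 𝓝[>] 0, HasHole μ c ε x r) : μ ⟂ₘ ν := by
  rw [← Measure.rnDeriv_eq_zero]
  filter_upwards [Measure.ae_rnDeriv_ne_zero_imp_of_ae ν h, Measure.rnDeriv_lt_top μ ν,
    (vitaliFamily ν c⁻¹).ae_tendsto_rnDeriv μ] with x hole hfin hlim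
  by_contra hD
  have hle := le_mul_of_frequently_hasHole ν hc hlim (hole hD)
  have hlt := ENNReal.mul_lt_mul_left hD hfin.ne hεC
  rw [one_mul] at hlt
  exact hle.not_gt hlt

end Doubling

theorem stmt13_general {X : Type*} [MetricSpace X] [SecondCountableTopology X] [MeasurableSpace X]
    [BorelSpace X] (μ ν : Measure X) [IsLocallyFiniteMeasure μ] [IsLocallyFiniteMeasure ν]
    [IsUnifLocDoublingMeasure ν] (hpor : 0 < porMeasure μ) : μ ⟂ₘ ν := by
  obtain ⟨c, hc, hc_lt⟩ := exists_between hpor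
  obtain ⟨ε, hε, hεC⟩ := ENNReal.exists_nnreal_pos_mul_lt
    (a := IsUnifLocDoublingMeasure.scalingConstantOf ν (2 / c)) ENNReal.coe_ne_top one_ne_zero
  rw [← ENNReal.ofReal_coe_nnreal] at hεC
  refine mutuallySingular_of_ae_frequently_hasHole ν hc hεC ?_
  filter_upwards [ae_eventually_hasHole_of_lt_porMeasure hc.le hε hc_lt] with x hx
  exact hx.frequently

/-- A Borel probability measure on `ℝ^d` with positive porosity is
singular with respect to Lebesgue measure. -/
theorem stmt13 (d : ℕ) (hd : 0 < d) (μ : Measure (EuclideanSpace ℝ (Fin d)))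
    [IsProbabilityMeasure μ] (hpor : 0 < porMeasure μ) :
    μ ⟂ₘ (volume : Measure (EuclideanSpace ℝ (Fin d))) :=
  stmt13_general μ volume hpor
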